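/- If f: (X, μ_X) → (Y, μ_Y) is an H-map between H-spaces, then the homotopy fiber of f is an H-space. -/

import Mathlib

open scoped Topology
open ContinuousMap

/-- Pointed homotopy: homotopy relative to the basepoint. -/
def PHomotopic {X Y : Type*} [TopologicalSpace X] [TopologicalSpace Y]
    (x₀ : X) (f g : C(X, Y)) : Prop :=
  ContinuousMap.HomotopicRel f g {x₀}

/-- A pointed map is null (inessential) if it is pointed-homotopic to the constant map. -/
def PNull {X Y : Type*} [TopologicalSpace X] [TopologicalSpace Y]
    (x₀ : X) (y₀ : Y) (f : C(X, Y)) : Prop :=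
  f x₀ = y₀ ∧ PHomotopic x₀ f (ContinuousMap.const X y₀)

/-- An H-space structure on a pointed space: a multiplication whose restriction to the
wedge is homotopic (rel basepoint) to the fold map, i.e. both units hold up to pointed homotopy. -/
structure HSpaceStr (X : Type*) [TopologicalSpace X] (x₀ : X) where
  mul : C(X × X, X)
  mul_pt : mul (x₀, x₀) = x₀
  left_unit : PHomotopic x₀ (mul.comp ((ContinuousMap.const X x₀).prodMk (ContinuousMap.id X)))
      (ContinuousMap.id X)
  right_unit : PHomotopic x₀ (mul.comp ((ContinuousMap.id X).prodMk (ContinuousMap.const X x₀)))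
      (ContinuousMap.id X)

/-- `f : X → X'` is an H-map with respect to H-structures `μ`, `μ'`. -/
def IsHMap {X X' : Type*} [TopologicalSpace X] [TopologicalSpace X']
    {x₀ : X} {x₀' : X'} (μ : HSpaceStr X x₀) (μ' : HSpaceStr X' x₀') (f : C(X, X')) : Prop :=
  f x₀ = x₀' ∧ PHomotopic (x₀, x₀) (f.comp μ.mul) (μ'.mul.comp (f.prodMap f))


/-- The homotopy fiber of a pointed map `f : X → Y` over `y₀`. -/
def HFiber {X Y : Type*} [TopologicalSpace X] [TopologicalSpace Y]
    (f : C(X, Y)) (y₀ : Y) : Type _ :=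
  {z : X × C(unitInterval, Y) // z.2 0 = f z.1 ∧ z.2 1 = y₀}

instance {X Y : Type*} [TopologicalSpace X] [TopologicalSpace Y] (f : C(X, Y)) (y₀ : Y) :
    TopologicalSpace (HFiber f y₀) :=
  inferInstanceAs (TopologicalSpace {z : X × C(unitInterval, Y) // z.2 0 = f z.1 ∧ z.2 1 = y₀})

/-- The basepoint of the homotopy fiber of a pointed map. -/
def HFiber.pt {X Y : Type*} [TopologicalSpace X] [TopologicalSpace Y]
    {f : C(X, Y)} {x₀ : X} {y₀ : Y} (hf : f x₀ = y₀) : HFiber f y₀ :=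
  ⟨(x₀, ContinuousMap.const _ y₀), by simp [hf]⟩

/-!
The homotopy witnessing that `f` is an H-map induces a product on the homotopy fiber. On each axis
it is the map of fibers induced by a square whose sides are translations by the basepoint, which are
homotopic to identities by homotopies `K` and `N`; the homotopy `h` in the square need not be
compatible with `K` and `N`, so this map of fibers need not be homotopic to the identity. It has
nevertheless a pointed right homotopy inverse, which replaces the path `p` of a point `(x, p)` of
the fiber by the concatenation of the reverses of `N` and `h` with `f ∘ K` and `p`. Precomposing the
product with the two inverses, one in each factor, makes both unit laws hold.
-/

open Set unitInterval

section Homotopies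

variable {A B Y Z : Type*} [TopologicalSpace A] [TopologicalSpace B] [TopologicalSpace Y]
  [TopologicalSpace Z] {S : Set A}

/-- The restriction of a relative homotopy along a map `u` of the source. -/
def precompHomotopyRel {f g : C(A, Y)} {T : Set B} (F : HomotopyRel f g S) (u : C(B, A))
    (hu : MapsTo u T S) : HomotopyRel (f.comp u) (g.comp u) T where
  toFun z := F (z.1, u z.2)
  map_zero_left _ := F.apply_zero _
  map_one_left _ := F.apply_one _
  prop' t _ hb := F.eq_fst t (hu hb)

/-- The image under a pointed map `v` of a homotopy to the constant map at the basepoint. -/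
def postcompNullhomotopy {u : C(A, Y)} {y₀ : Y} {z₀ : Z} (γ : HomotopyRel u (const A y₀) S)
    (v : C(Y, Z)) (hv : v y₀ = z₀) : HomotopyRel (v.comp u) (const A z₀) S :=
  (γ.compContinuousMap v).cast rfl (ContinuousMap.ext fun _ ↦ hv)

/-- The initial segments of a homotopy `F`: the one with parameter `s` runs from `F 0` to `F s`,
so that the whole is a homotopy from the initial map of `F`, pulled back to `I × A`, to `F`. -/
def initialSegments {f g : C(A, Y)} (F : HomotopyRel f g S) :
    HomotopyRel (f.comp ContinuousMap.snd) F.toContinuousMap (Prod.snd ⁻¹' S : Set (I × A)) where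
  toFun z := F (z.1 * z.2.1, z.2.2)
  map_zero_left _ := by simp
  map_one_left _ := by simp
  prop' t _ ha := F.eq_fst _ ha

theorem initialSegments_apply_zero {f g : C(A, Y)} (F : HomotopyRel f g S) (t : I) (a : A) :
    initialSegments F (t, 0, a) = f a :=
  (congrArg (fun s ↦ F (s, a)) (mul_zero t)).trans (F.apply_zero a)

theorem initialSegments_apply_one {f g : C(A, Y)} (F : HomotopyRel f g S) (t : I) (a : A) :
    initialSegments F (t, 1, a) = F (t, a) :=
  congrArg (fun s ↦ F (s, a)) (mul_one t)

theorem homotopyRel_trans_apply_congr {T : Set B} {f₀ f₁ f₂ : C(A, Y)} {g₀ g₁ g₂ : C(B, Y)}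
    {F : HomotopyRel f₀ f₁ S} {F' : HomotopyRel f₁ f₂ S} {G : HomotopyRel g₀ g₁ T}
    {G' : HomotopyRel g₁ g₂ T} {a : A} {b : B} (h : ∀ t, F (t, a) = G (t, b))
    (h' : ∀ t, F' (t, a) = G' (t, b)) (t : I) : F.trans F' (t, a) = G.trans G' (t, b) := by
  simp only [HomotopyRel.trans_apply, h, h']

/-- Two homotopies rel `S` with the same ends are homotopic through such homotopies. -/
def HomotopicRelEnds {f g : C(A, Y)} (F G : HomotopyRel f g S) : Prop :=
  HomotopicRel F.toContinuousMap G.toContinuousMap {z | z.1 = 0 ∨ z.1 = 1 ∨ z.2 ∈ S}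

namespace HomotopicRelEnds

variable {f g k : C(A, Y)}

/- Exchanging the two parameters lets homotopies of homotopies be concatenated with
`HomotopyRel.trans` over the base `I × A`. -/
theorem iff_exists_homotopyRel {F G : HomotopyRel f g S} : HomotopicRelEnds F G ↔
    ∃ P : HomotopyRel (f.comp ContinuousMap.snd) (g.comp ContinuousMap.snd)
      (Prod.snd ⁻¹' S : Set (I × A)),
      (∀ t a, P (t, 0, a) = F (t, a)) ∧ ∀ t a, P (t, 1, a) = G (t, a) := by
  constructor
  · rintro ⟨Q⟩
    refine ⟨⟨⟨⟨fun z ↦ Q (z.2.1, z.1, z.2.2), by fun_prop⟩, fun z ↦ ?_, fun z ↦ ?_⟩,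
      fun t z hz ↦ ?_⟩, fun t a ↦ Q.apply_zero _, fun t a ↦ Q.apply_one _⟩
    · exact (Q.eq_fst _ (.inl rfl)).trans (F.apply_zero _)
    · exact (Q.eq_fst _ (.inr (.inl rfl))).trans (F.apply_one _)
    · exact (Q.eq_fst (x := (t, z.2)) z.1 (.inr (.inr hz))).trans (F.eq_fst t hz)
  · rintro ⟨P, hF, hG⟩
    refine ⟨⟨⟨⟨fun z ↦ P (z.2.1, z.1, z.2.2), by fun_prop⟩, fun z ↦ hF _ _, fun z ↦ hG _ _⟩, ?_⟩⟩
    rintro s ⟨t, a⟩ (rfl | rfl | ha)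
    · exact (P.apply_zero _).trans (F.apply_zero a).symm
    · exact (P.apply_one _).trans (F.apply_one a).symm
    · exact (P.eq_fst (x := (s, a)) t ha).trans (F.eq_fst t ha).symm

theorem symm {F G : HomotopyRel f g S} (h : HomotopicRelEnds F G) : HomotopicRelEnds G F :=
  HomotopicRel.symm h

theorem trans {F G H : HomotopyRel f g S} (h : HomotopicRelEnds F G)
    (h' : HomotopicRelEnds G H) : HomotopicRelEnds F H :=
  HomotopicRel.trans h h'

theorem trans_congr_right (F : HomotopyRel f g S) {G G' : HomotopyRel g k S}
    (h : HomotopicRelEnds G G') : HomotopicRelEnds (F.trans G) (F.trans G') := by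
  obtain ⟨P, hG, hG'⟩ := iff_exists_homotopyRel.1 h
  exact iff_exists_homotopyRel.2
    ⟨(precompHomotopyRel F ContinuousMap.snd (mapsTo_preimage _ _)).trans P,
      fun t a ↦ homotopyRel_trans_apply_congr (fun _ ↦ by rfl) (hG · a) t,
      fun t a ↦ homotopyRel_trans_apply_congr (fun _ ↦ by rfl) (hG' · a) t⟩

theorem refl_trans (F : HomotopyRel f g S) :
    HomotopicRelEnds ((HomotopyRel.refl f S).trans F) F := by
  let α := Path.Homotopy.reflTrans Path.id
  have reparam (t : I) (a : A) :
      (HomotopyRel.refl f S).trans F (t, a) = F ((Path.refl 0).trans Path.id t, a) := by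
    rw [HomotopyRel.trans_apply, Path.trans_apply]
    split_ifs
    · exact (F.apply_zero a).symm
    · rfl
  refine ⟨⟨⟨⟨fun z ↦ F (α (z.1, z.2.1), z.2.2), by fun_prop⟩, fun z ↦ ?_, fun z ↦ ?_⟩, ?_⟩⟩
  · simpa using (reparam z.1 z.2).symm
  · simp
  · rintro s ⟨t, a⟩ h
    change F (α (s, t), a) = (HomotopyRel.refl f S).trans F (t, a)
    rcases h with rfl | rfl | ha
    · simp
    · simp
    · rw [F.eq_fst _ ha, HomotopyRel.eq_fst _ _ ha]

theorem trans_symm_trans (F : HomotopyRel f g S) (G : HomotopyRel f k S) :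
    HomotopicRelEnds (F.trans (F.symm.trans G)) G := by
  have contract : HomotopicRelEnds
      ((HomotopyRel.refl f S).trans ((HomotopyRel.refl f S).trans G))
      (F.trans (F.symm.trans G)) :=
    iff_exists_homotopyRel.2 ⟨(initialSegments F).trans ((initialSegments F).symm.trans
        (precompHomotopyRel G ContinuousMap.snd (mapsTo_preimage _ _))),
      fun t a ↦ homotopyRel_trans_apply_congr (fun t ↦ by exact initialSegments_apply_zero F t a)
        (homotopyRel_trans_apply_congr (fun t ↦ by exact initialSegments_apply_zero F (σ t) a)
          fun _ ↦ by rfl) t,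
      fun t a ↦ homotopyRel_trans_apply_congr (fun t ↦ by exact initialSegments_apply_one F t a)
        (homotopyRel_trans_apply_congr (fun t ↦ by exact initialSegments_apply_one F (σ t) a)
          fun _ ↦ by rfl) t⟩
  exact contract.symm.trans ((refl_trans _).trans (refl_trans _))

theorem postcompNullhomotopy_naturality {u : C(A, Y)} {y₀ : Y} {z₀ : Z}
    (γ : HomotopyRel u (const A y₀) S) {v w : C(Y, Z)} (N : HomotopyRel v w {y₀})
    (hv : v y₀ = z₀) (hw : w y₀ = z₀) :
    HomotopicRelEnds (postcompNullhomotopy γ v hv)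
      ((precompHomotopyRel N u fun _ ha ↦ γ.fst_eq_snd ha).trans
        (postcompNullhomotopy γ w hw)) := by
  have hN (s : I) : N (s, y₀) = z₀ := (N.eq_fst s rfl).trans hv
  let Nu := precompHomotopyRel N u fun _ ha ↦ γ.fst_eq_snd ha
  let Q : HomotopyRel Nu.toContinuousMap ((const A z₀).comp ContinuousMap.snd)
      (Prod.snd ⁻¹' S : Set (I × A)) :=
    { toFun z := N (z.2.1, γ (z.1, z.2.2))
      map_zero_left z := congrArg (fun y ↦ N (z.1, y)) (γ.apply_zero z.2)
      map_one_left z := (congrArg (fun y ↦ N (z.1, y)) (γ.apply_one z.2)).trans (hN _)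
      prop' t z hz := congrArg (fun y ↦ N (z.1, y)) (γ.eq_fst t hz) }
  exact (refl_trans _).symm.trans (iff_exists_homotopyRel.2 ⟨(initialSegments Nu).trans Q,
    fun t a ↦ homotopyRel_trans_apply_congr (fun t ↦ by exact initialSegments_apply_zero Nu t a)
      (fun t ↦ by exact N.apply_zero _) t,
    fun t a ↦ homotopyRel_trans_apply_congr (fun t ↦ by exact initialSegments_apply_one Nu t a)
      (fun t ↦ by exact N.apply_one _) t⟩)

end HomotopicRelEnds

end Homotopies

namespace HFiber

variable {A X X' Y Y' : Type*} [TopologicalSpace A] [TopologicalSpace X] [TopologicalSpace X']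
  [TopologicalSpace Y] [TopologicalSpace Y'] {S : Set A} {f : C(X, Y)} {g : C(X', Y')}
  {x₀ : X} {x₀' : X'} {y₀ : Y} {y₀' : Y'}

/-- The projection of the homotopy fiber to the source of `f`. -/
def proj : C(HFiber f y₀, X) := ⟨fun z ↦ z.1.1, continuous_fst.comp continuous_subtype_val⟩

/-- The tautological nullhomotopy of `f ∘ proj`. -/
def path (hf : f x₀ = y₀) :
    HomotopyRel (f.comp proj) (const (HFiber f y₀) y₀) {HFiber.pt hf} where
  toFun z := z.2.1.2 z.1
  continuous_toFun := by
    have : Continuous fun z : HFiber f y₀ ↦ z.1.2 := continuous_snd.comp continuous_subtype_val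
    fun_prop
  map_zero_left z := z.2.1
  map_one_left z := z.2.2
  prop' := by rintro t _ rfl; exact hf.symm

/-- The map to the homotopy fiber given by a map `u` to `X` and a nullhomotopy of `f ∘ u`. -/
def lift (u : C(A, X)) (γ : HomotopyRel (f.comp u) (const A y₀) S) : C(A, HFiber f y₀) where
  toFun a := ⟨(u a, (γ.toContinuousMap.comp prodSwap).curry a), γ.apply_zero a, γ.apply_one a⟩
  continuous_toFun := Continuous.subtype_mk (by fun_prop) _

theorem lift_proj_path (hf : f x₀ = y₀) : lift proj (path hf) = ContinuousMap.id _ := rfl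

theorem lift_apply_congr {B : Type*} [TopologicalSpace B] {T : Set B} {u : C(A, X)} {v : C(B, X)}
    {γ : HomotopyRel (f.comp u) (const A y₀) S} {δ : HomotopyRel (f.comp v) (const B y₀) T}
    {a : A} {b : B} (huv : u a = v b) (hγδ : ∀ t, γ (t, a) = δ (t, b)) :
    lift u γ a = lift v δ b :=
  Subtype.ext (Prod.ext huv (ContinuousMap.ext hγδ))

theorem lift_apply_of_mem (hf : f x₀ = y₀) {u : C(A, X)}
    (γ : HomotopyRel (f.comp u) (const A y₀) S) {a : A} (ha : a ∈ S) (hu : u a = x₀) :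
    lift u γ a = HFiber.pt hf :=
  Subtype.ext (Prod.ext hu (ContinuousMap.ext fun t ↦ γ.eq_snd t ha))

theorem lift_homotopicRel (u : C(A, X)) {γ δ : HomotopyRel (f.comp u) (const A y₀) S}
    (h : HomotopicRelEnds γ δ) : HomotopicRel (lift u γ) (lift u δ) S := by
  obtain ⟨P, hγ, hδ⟩ := HomotopicRelEnds.iff_exists_homotopyRel.1 h
  exact ⟨⟨⟨lift (u.comp ContinuousMap.snd) P, fun a ↦ lift_apply_congr rfl (hγ · a),
    fun a ↦ lift_apply_congr rfl (hδ · a)⟩,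
    fun s a ha ↦ lift_apply_congr rfl fun t ↦ (P.eq_fst t ha).trans (γ.eq_fst t ha).symm⟩⟩

/- Slide the start of the nullhomotopy along the track of `K`. -/
theorem lift_trans_homotopicRel {u v : C(A, X)} (K : HomotopyRel u v S)
    (γ : HomotopyRel (f.comp v) (const A y₀) S) :
    HomotopicRel (lift u ((K.compContinuousMap f).trans γ)) (lift v γ) S := by
  let P : HomotopyRel (f.comp K.symm.toContinuousMap) ((const A y₀).comp ContinuousMap.snd)
      (Prod.snd ⁻¹' S : Set (I × A)) :=
    (initialSegments (K.symm.compContinuousMap f)).symm.trans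
      (precompHomotopyRel γ ContinuousMap.snd (mapsTo_preimage _ _))
  have slide : HomotopicRel (lift v ((HomotopyRel.refl (f.comp v) S).trans γ))
      (lift u ((K.compContinuousMap f).trans γ)) S := by
    refine ⟨⟨⟨lift K.symm.toContinuousMap P, fun a ↦ ?_, fun a ↦ ?_⟩, fun s a ha ↦ ?_⟩⟩
    · refine lift_apply_congr (K.symm.apply_zero a)
        (homotopyRel_trans_apply_congr (fun t ↦ ?_) fun _ ↦ by rfl)
      exact initialSegments_apply_zero (K.symm.compContinuousMap f) (σ t) a
    · refine lift_apply_congr (K.symm.apply_one a)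
        (homotopyRel_trans_apply_congr (fun t ↦ ?_) fun _ ↦ by rfl)
      refine (initialSegments_apply_one (K.symm.compContinuousMap f) (σ t) a).trans ?_
      exact congrArg (fun s ↦ f (K (s, a))) (unitInterval.symm_symm t)
    · refine lift_apply_congr (K.symm.eq_fst s ha) fun t ↦ ?_
      exact (P.eq_snd (x := (s, a)) t ha).trans
        (((HomotopyRel.refl (f.comp v) S).trans γ).eq_snd t ha).symm
  exact slide.symm.trans (lift_homotopicRel v (.refl_trans γ))

/-- The map of homotopy fibers induced by a square that commutes up to the pointed homotopy `h`. -/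
noncomputable def map (hf : f x₀ = y₀) (u : C(X, X')) (v : C(Y, Y')) (hv : v y₀ = y₀')
    (h : HomotopyRel (g.comp u) (v.comp f) {x₀}) : C(HFiber f y₀, HFiber g y₀') :=
  lift (u.comp proj) ((precompHomotopyRel h proj (by rintro _ rfl; rfl)).trans
    (postcompNullhomotopy (path hf) v hv))

theorem map_comp_lift (hf : f x₀ = y₀) {u : C(X, X')} {v : C(Y, Y')} (hv : v y₀ = y₀')
    (h : HomotopyRel (g.comp u) (v.comp f) {x₀}) (w : C(A, X)) (hw : MapsTo w S {x₀})
    (γ : HomotopyRel (f.comp w) (const A y₀) S) :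
    (map hf u v hv h).comp (lift w γ) =
      lift (u.comp w) ((precompHomotopyRel h w hw).trans (postcompNullhomotopy γ v hv)) :=
  ContinuousMap.ext fun _ ↦
    lift_apply_congr rfl (homotopyRel_trans_apply_congr (fun _ ↦ rfl) fun _ ↦ rfl)

theorem exists_map_comp_homotopicRel_id (hf : f x₀ = y₀) {k : C(X, X)} {n : C(Y, Y)}
    (hk : HomotopicRel k (ContinuousMap.id X) {x₀})
    (hn : HomotopicRel n (ContinuousMap.id Y) {y₀}) (hn₀ : n y₀ = y₀)
    (h : HomotopyRel (f.comp k) (n.comp f) {x₀}) :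
    ∃ r : C(HFiber f y₀, HFiber f y₀), r (HFiber.pt hf) = HFiber.pt hf ∧
      HomotopicRel ((map hf k n hn₀ h).comp r) (ContinuousMap.id _) {HFiber.pt hf} := by
  obtain ⟨K⟩ := hk
  obtain ⟨N⟩ := hn
  have hproj : MapsTo (proj : C(HFiber f y₀, X)) {HFiber.pt hf} {x₀} := by rintro _ rfl; rfl
  have hfproj : MapsTo (f.comp proj : C(HFiber f y₀, Y)) {HFiber.pt hf} {y₀} := by
    rintro _ rfl; exact hf
  let Kπ : HomotopyRel (k.comp proj) proj {HFiber.pt hf} := precompHomotopyRel K proj hproj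
  let Nfπ : HomotopyRel (n.comp (f.comp proj)) (f.comp proj) {HFiber.pt hf} :=
    precompHomotopyRel N (f.comp proj) hfproj
  let hπ : HomotopyRel (f.comp (k.comp proj)) (n.comp (f.comp proj)) {HFiber.pt hf} :=
    precompHomotopyRel h proj hproj
  let target := (Kπ.compContinuousMap f).trans (path hf)
  let δ := Nfπ.symm.trans (hπ.symm.trans target)
  refine ⟨lift proj δ, lift_apply_of_mem hf δ rfl rfl, ?_⟩
  have cancel : HomotopicRelEnds (hπ.trans (postcompNullhomotopy δ n hn₀)) target :=
    ((HomotopicRelEnds.postcompNullhomotopy_naturality δ N hn₀ rfl).trans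
      (.trans_symm_trans Nfπ _)).trans_congr_right hπ |>.trans (.trans_symm_trans hπ target)
  rw [map_comp_lift hf hn₀ h proj hproj δ, ← lift_proj_path hf]
  exact (lift_homotopicRel _ cancel).trans (lift_trans_homotopicRel Kπ (path hf))

section Product

variable {X'' Y'' : Type*} [TopologicalSpace X''] [TopologicalSpace Y''] {k : C(X'', Y'')}
  {y₀'' : Y''}

/-- The canonical map from a product of homotopy fibers to the homotopy fiber of the product. -/
def ofProd (hf : f x₀ = y₀) (hg : g x₀' = y₀') :
    C(HFiber f y₀ × HFiber g y₀', HFiber (f.prodMap g) (y₀, y₀')) :=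
  lift (S := {(HFiber.pt hf, HFiber.pt hg)}) (proj.prodMap proj)
    ((precompHomotopyRel (path hf) .fst (by rintro _ rfl; rfl)).prod
      (precompHomotopyRel (path hg) .snd (by rintro _ rfl; rfl)))

/-- The product of points of two homotopy fibers, given by products `m` and `m'` on the sources and
targets and a homotopy expressing that `f`, `g` and `k` take `m` to `m'`. -/
noncomputable def mul (hf : f x₀ = y₀) (hg : g x₀' = y₀') (m : C(X × X', X''))
    (m' : C(Y × Y', Y'')) (hm' : m' (y₀, y₀') = y₀'')
    (H : HomotopyRel (k.comp m) (m'.comp (f.prodMap g)) {(x₀, x₀')}) :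
    C(HFiber f y₀ × HFiber g y₀', HFiber k y₀'') :=
  (map (Prod.ext hf hg) m m' hm' H).comp (ofProd hf hg)

variable (hf : f x₀ = y₀) (hg : g x₀' = y₀') {m : C(X × X', X'')} {m' : C(Y × Y', Y'')}
  (hm' : m' (y₀, y₀') = y₀'') (H : HomotopyRel (k.comp m) (m'.comp (f.prodMap g)) {(x₀, x₀')})

theorem mul_pt {x₀'' : X''} (hk : k x₀'' = y₀'') (hm : m (x₀, x₀') = x₀'') :
    mul hf hg m m' hm' H (HFiber.pt hf, HFiber.pt hg) = HFiber.pt hk := by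
  have hpt : ofProd hf hg (HFiber.pt hf, HFiber.pt hg) = HFiber.pt (Prod.ext hf hg) :=
    lift_apply_of_mem _ _ rfl rfl
  rw [mul, comp_apply, hpt]
  exact lift_apply_of_mem hk _ rfl hm

theorem mul_comp_const_prodMk_id :
    (mul hf hg m m' hm' H).comp ((const _ (HFiber.pt hf)).prodMk (.id _)) =
      map hg (m.comp ((const _ x₀).prodMk (.id _))) (m'.comp ((const _ y₀).prodMk (.id _))) hm'
        ((precompHomotopyRel H ((const _ x₀).prodMk (.id _)) (by rintro _ rfl; rfl)).cast rfl
          (ContinuousMap.ext fun x ↦ congrArg (fun y ↦ m' (y, g x)) hf)) :=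
  ContinuousMap.ext fun _ ↦
    lift_apply_congr rfl (homotopyRel_trans_apply_congr (fun _ ↦ by rfl) fun _ ↦ by rfl)

theorem mul_comp_id_prodMk_const :
    (mul hf hg m m' hm' H).comp (.prodMk (.id _) (const _ (HFiber.pt hg))) =
      map hf (m.comp (.prodMk (.id _) (const _ x₀'))) (m'.comp (.prodMk (.id _) (const _ y₀'))) hm'
        ((precompHomotopyRel H (.prodMk (.id _) (const _ x₀')) (by rintro _ rfl; rfl)).cast rfl
          (ContinuousMap.ext fun x ↦ congrArg (fun y ↦ m' (f x, y)) hg)) :=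
  ContinuousMap.ext fun _ ↦
    lift_apply_congr rfl (homotopyRel_trans_apply_congr (fun _ ↦ by rfl) fun _ ↦ by rfl)

end Product

end HFiber

/-- The H-space structure obtained from a product `m` whose restrictions to the two axes have
pointed right homotopy inverses `l` and `r`: precompose `m` with `r × l`. -/
def HSpaceStr.ofAxes {X : Type*} [TopologicalSpace X] {x₀ : X} (m : C(X × X, X))
    (hm : m (x₀, x₀) = x₀) {l r : C(X, X)} (hl : l x₀ = x₀) (hr : r x₀ = x₀)
    (left : HomotopicRel ((m.comp ((const X x₀).prodMk (.id X))).comp l) (.id X) {x₀})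
    (right : HomotopicRel ((m.comp (.prodMk (.id X) (const X x₀))).comp r) (.id X) {x₀}) :
    HSpaceStr X x₀ where
  mul := m.comp (r.prodMap l)
  mul_pt := by simp [hl, hr, hm]
  left_unit := by
    have axis : (m.comp (r.prodMap l)).comp ((const X x₀).prodMk (.id X)) =
        (m.comp ((const X x₀).prodMk (.id X))).comp l :=
      ContinuousMap.ext fun x ↦ congrArg (fun y ↦ m (y, l x)) hr
    exact axis ▸ left
  right_unit := by
    have axis : (m.comp (r.prodMap l)).comp (.prodMk (.id X) (const X x₀)) =
        (m.comp (.prodMk (.id X) (const X x₀))).comp r :=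
      ContinuousMap.ext fun x ↦ congrArg (fun y ↦ m (r x, y)) hl
    exact axis ▸ right

/-- the homotopy fiber of an H-map between H-spaces is an H-space. -/
theorem hfiber_of_hmap_is_hspace
    {X Y : Type*} [TopologicalSpace X] [TopologicalSpace Y] (x₀ : X) (y₀ : Y)
    (μX : HSpaceStr X x₀) (μY : HSpaceStr Y y₀) (f : C(X, Y))
    (hf : IsHMap μX μY f) :
    Nonempty (HSpaceStr (HFiber f y₀) (HFiber.pt hf.1)) := by
  obtain ⟨H⟩ := hf.2
  let M := HFiber.mul hf.1 hf.1 μX.mul μY.mul μY.mul_pt H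
  let pt := HFiber.pt hf.1
  have hM : M (pt, pt) = pt := HFiber.mul_pt hf.1 hf.1 μY.mul_pt H hf.1 μX.mul_pt
  obtain ⟨l, hl, left⟩ : ∃ l, l pt = pt ∧
      HomotopicRel ((M.comp ((const _ pt).prodMk (.id _))).comp l) (.id _) {pt} := by
    rw [HFiber.mul_comp_const_prodMk_id]
    exact HFiber.exists_map_comp_homotopicRel_id hf.1 μX.left_unit μY.left_unit μY.mul_pt _
  obtain ⟨r, hr, right⟩ : ∃ r, r pt = pt ∧
      HomotopicRel ((M.comp (.prodMk (.id _) (const _ pt))).comp r) (.id _) {pt} := by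
    rw [HFiber.mul_comp_id_prodMk_const]
    exact HFiber.exists_map_comp_homotopicRel_id hf.1 μX.right_unit μY.right_unit μY.mul_pt _
  exact ⟨.ofAxes M hM hl hr left right⟩
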